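/- For all natural numbers m and n, ∏_{i=1}^{m} ∏_{j=1}^{n} (i+j+1)/(i+j-1) = (1/(m+n+1)) * C(m+n+1, m+1) * C(m+n+1, m). -/

import Mathlib

lemma prod_Icc_add_succ_div_add_pred {a : ℚ} (ha : 0 < a) (n : ℕ) :
    ∏ j ∈ Finset.Icc 1 n, ((a + j + 1) / (a + j - 1)) =
      (a + n) * (a + n + 1) / (a * (a + 1)) := by
  induction n with
  | zero =>
    have : a + 1 ≠ 0 := by positivity
    simp
    field_simp
  | succ n ih =>
    rw [Finset.prod_Icc_succ_top (by omega), ih]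
    push_cast
    have h : a + (n + 1) - 1 = a + n := by ring
    have h1 : a + n ≠ 0 := by positivity
    have h2 : a + 1 ≠ 0 := by positivity
    rw [h]
    field_simp
    ring

lemma cast_choose_add_eq_factorial_div (a b : ℕ) :
    ((a + b).choose a : ℚ) = (a + b).factorial / (a.factorial * b.factorial) := by
  rw [Nat.cast_choose ℚ (Nat.le_add_right a b), Nat.add_sub_cancel_left]

lemma prod_Icc_add_mul_add_succ_div (m n : ℕ) :
    ∏ i ∈ Finset.Icc 1 m, (((i : ℚ) + n) * (i + n + 1) / (i * (i + 1))) =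
      (m + n).factorial * (m + n + 1).factorial /
        (m.factorial * (m + 1).factorial * (n.factorial * (n + 1).factorial)) := by
  induction m with
  | zero =>
    simp
    field_simp
  | succ m ih =>
    rw [Finset.prod_Icc_succ_top (by omega), ih, show m + 1 + n = m + n + 1 by ring]
    simp only [Nat.factorial_succ]
    push_cast
    field_simp
    ring

/-- `∏_{i=1}^{m} ∏_{j=1}^{n} (i+j+1)/(i+j-1) = (1/(m+n+1)) C(m+n+1, m+1) C(m+n+1, m)`. -/
theorem prod_ratio_eq_narayana_form (m n : ℕ) :
    (∏ i ∈ Finset.Icc 1 m, ∏ j ∈ Finset.Icc 1 n,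
        (((i : ℚ) + j + 1) / ((i : ℚ) + j - 1))) =
      (1 / ((m : ℚ) + n + 1)) * ((m + n + 1).choose (m + 1) : ℚ) *
        ((m + n + 1).choose m : ℚ) := by
  have hfirst := cast_choose_add_eq_factorial_div (m + 1) n
  have hsecond := cast_choose_add_eq_factorial_div m (n + 1)
  rw [show m + 1 + n = m + n + 1 by ring] at hfirst
  rw [← add_assoc] at hsecond
  rw [hfirst, hsecond, Finset.prod_congr rfl fun i hi => prod_Icc_add_succ_div_add_pred
    (Nat.cast_pos.mpr (Finset.mem_Icc.mp hi).1) n, prod_Icc_add_mul_add_succ_div]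
  simp only [Nat.factorial_succ]
  push_cast
  field_simp
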